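/- There exists a permutation σ of size k! + k − 1 such that cocc(π, σ) = 1 for every π ∈ S_k (a minimal superpermutation for consecutive patterns). -/

import Mathlib

open Filter Finset

/-- The value of the permutation `σ` at a natural-number index (junk value `0` out of range). -/
def papp {n : ℕ} (σ : Equiv.Perm (Fin n)) (j : ℕ) : ℕ :=
  if h : j < n then (σ ⟨j, h⟩ : ℕ) else 0

/-- The number of consecutive occurrences of the pattern `π` in `σ`:
the number of intervals `i, i+1, …, i+k-1` of indices such that `σ` restricted to them
is in the same relative order as `π`. -/
def cocc {k n : ℕ} (π : Equiv.Perm (Fin k)) (σ : Equiv.Perm (Fin n)) : ℕ :=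
  ((Finset.range (n + 1 - k)).filter
    (fun i => ∀ a b : Fin k, π a < π b ↔ papp σ (i + (a : ℕ)) < papp σ (i + (b : ℕ)))).card

/-- The direct sum `τ ⊕ σ` of two permutations: `τ(1)…τ(m)(σ(1)+m)…(σ(n)+m)`. -/
def dsum {m n : ℕ} (τ : Equiv.Perm (Fin m)) (σ : Equiv.Perm (Fin n)) :
    Equiv.Perm (Fin (m + n)) :=
  finSumFinEquiv.permCongr (Equiv.sumCongr τ σ)

/-!
The permutations of size `k + 1` are the edges of a directed multigraph on the permutations of size
`k`: the edge `p` goes from the pattern of its first `k` entries to the pattern of its last `k`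
entries. The cyclic rotation of positions shows that every vertex has as many incoming as outgoing
edges, and reading the windows of `p ⊕ q` from left to right gives a walk from `p` to `q`. Hence
there is an Eulerian circuit. The word realizing it is written from left to right over `ℚ`: by
density there is always room for a new value standing in the prescribed order to the previous `k`
values and different from all earlier ones.
-/

open Equiv (Perm)

namespace Superpermutation

section EulerianCircuit

variable {E V : Type*}

lemma sameCycle_mul_swap_of_sameCycle [Finite E] [DecidableEq E] {f : Perm E} {a b x : E}
    (hab : ¬ f.SameCycle a b) (hx : f.SameCycle a x) :
    (f * Equiv.swap a b).SameCycle a x := by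
  obtain ⟨n, hn⟩ := hx.symm.exists_nat_pow_eq
  induction n generalizing x with
  | zero => exact Eq.sameCycle hn.symm _
  | succ n ih =>
    obtain rfl | hxa := eq_or_ne x a
    · rfl
    have hxb : x ≠ b := by rintro rfl; exact hab hx
    have hfx : (f * Equiv.swap a b) x = f x := by
      rw [Equiv.Perm.mul_apply, Equiv.swap_apply_of_ne_of_ne hxa hxb]
    rw [← Equiv.Perm.sameCycle_apply_right, hfx]
    exact ih (Equiv.Perm.sameCycle_apply_right.2 hx) (by rwa [pow_succ] at hn)

lemma sameCycle_mul_swap [Finite E] [DecidableEq E] {f : Perm E} {a b : E}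
    (hab : ¬ f.SameCycle a b) : (f * Equiv.swap a b).SameCycle a b := by
  have hfb : (f * Equiv.swap a b) b = f a := by simp
  rw [← Equiv.Perm.sameCycle_apply_right, hfb]
  exact sameCycle_mul_swap_of_sameCycle hab (Equiv.Perm.sameCycle_apply_right.2 .rfl)

/-- A transition system of the directed multigraph with edge set `E` and endpoint maps `source` and
`target`: it pairs every edge entering a vertex with an edge leaving it. Its cycles are
edge-disjoint closed trails covering all edges. -/
def IsTransitionSystem (source target : E → V) (f : Perm E) : Prop :=
  ∀ e, source (f e) = target e

lemma IsTransitionSystem.mul_swap [DecidableEq E] {source target : E → V} {f : Perm E}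
    (hf : IsTransitionSystem source target f) {a b : E} (hab : target a = target b) :
    IsTransitionSystem source target (f * Equiv.swap a b) := fun e ↦
  (hf _).trans (Equiv.apply_swap_eq_self hab e)

/-- Euler's theorem. In a transition system in which the cycle through `e₀` is as large as possible,
that cycle contains every edge: two edges entering the same vertex on different cycles could be
swapped, which would merge their cycles. -/
theorem exists_isTransitionSystem_isCycleOn_univ [Finite E] {source target : E → V}
    (hbal : ∃ f, IsTransitionSystem source target f) (e₀ : E)
    (hconn : ∀ e, Relation.ReflTransGen (fun a b ↦ target a = source b) e₀ e) :
    ∃ f, IsTransitionSystem source target f ∧ f.IsCycleOn Set.univ := by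
  classical
  obtain ⟨f, hf, hmax⟩ := (Set.toFinite {f | IsTransitionSystem source target f}).exists_maximalFor
    (fun f ↦ {e | f.SameCycle e₀ e}) _ hbal
  have hclosed (a c : E) (ha : f.SameCycle e₀ a) (hac : target a = source c) :
      f.SameCycle e₀ c := by
    obtain ⟨b, rfl⟩ := f.surjective c
    rw [Equiv.Perm.sameCycle_apply_right]
    by_contra hb
    have hab : ¬ f.SameCycle a b := fun h ↦ hb (ha.trans h)
    have h₀ := (sameCycle_mul_swap_of_sameCycle hab ha.symm).symm
    exact hb <| hmax (hf.mul_swap (hac.trans (hf b)))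
      (fun x hx ↦ h₀.trans (sameCycle_mul_swap_of_sameCycle hab (ha.symm.trans hx)))
      (h₀.trans (sameCycle_mul_swap hab))
  have hcycle (e : E) : f.SameCycle e₀ e := by
    induction hconn e with
    | refl => rfl
    | tail _ hbc ih => exact hclosed _ _ ih hbc
  exact ⟨f, hf, Set.bijOn_univ.2 f.bijective, fun x _ y _ ↦ (hcycle x).symm.trans (hcycle y)⟩

lemma card_filter_range_pow_apply_eq [Fintype E] [DecidableEq E] {f : Perm E}
    (hf : f.IsCycleOn Set.univ) (x y : E) :
    #{i ∈ range (Fintype.card E) | (f ^ i) x = y} = 1 := by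
  rw [← coe_univ] at hf
  obtain ⟨n, hn, rfl⟩ := hf.exists_pow_eq (mem_univ x) (mem_univ y)
  rw [card_univ] at hn
  refine card_eq_one.2 ⟨n, ext fun i ↦ ?_⟩
  rw [mem_filter, mem_range, mem_singleton, hf.pow_apply_eq_pow_apply (mem_univ x), card_univ]
  exact ⟨fun ⟨hi, h⟩ ↦ h.eq_of_lt_of_lt hi hn, by rintro rfl; exact ⟨hn, rfl⟩⟩

end EulerianCircuit

section Standardization

variable {α β : Type*} [LinearOrder α] [LinearOrder β] {m n : ℕ}

/-- The standardization of a word: the permutation whose entries are in the same relative order as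
its letters, equal letters being ordered from left to right. For a word without repeated letters,
this is its pattern. -/
def standardize (g : Fin n → α) : Perm (Fin n) :=
  (Tuple.sort g)⁻¹

lemma standardize_eq_of_forall_lt {g : Fin n → α} {p : Perm (Fin n)}
    (h : ∀ a b, p a < p b → g a < g b) : standardize g = p := by
  have hmono : StrictMono (g ∘ ⇑p⁻¹) := fun i j hij ↦ h _ _ (by simpa using hij)
  rw [standardize, inv_eq_iff_eq_inv, eq_comm, Tuple.eq_sort_iff]
  exact ⟨hmono.monotone, fun i j hij heq ↦ absurd heq (hmono hij).ne⟩

lemma standardize_coe (p : Perm (Fin n)) : standardize p = p :=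
  standardize_eq_of_forall_lt fun _ _ ↦ id

lemma standardize_lt_standardize_iff (g : Fin n → α) (a b : Fin n) :
    standardize g a < standardize g b ↔ g a < g b ∨ g a = g b ∧ a < b := by
  obtain ⟨hmono, hties⟩ := (Tuple.eq_sort_iff (f := g)).1 rfl
  have hlex : StrictMono fun i ↦ toLex (g (Tuple.sort g i), Tuple.sort g i) := fun i j hij ↦
    Prod.Lex.toLex_lt_toLex.2 <| (hmono hij.le).lt_or_eq.imp_right fun h ↦ ⟨h, hties i j hij h⟩
  rw [← hlex.lt_iff_lt, Prod.Lex.toLex_lt_toLex]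
  simp [standardize]

lemma standardize_eq_iff {g : Fin n → α} {p : Perm (Fin n)} :
    standardize g = p ↔ ∀ a b, p a < p b ↔ g a < g b ∨ g a = g b ∧ a < b := by
  refine ⟨by rintro rfl; exact standardize_lt_standardize_iff g, fun h ↦ ?_⟩
  calc
    standardize g = standardize p := .symm <| standardize_eq_of_forall_lt fun a b hab ↦ by
      rwa [h, ← standardize_lt_standardize_iff]
    _ = p := standardize_coe p

lemma standardize_eq_iff_of_injective {g : Fin n → α} (hg : Function.Injective g)
    {p : Perm (Fin n)} : standardize g = p ↔ ∀ a b, p a < p b ↔ g a < g b := by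
  have hties (a b : Fin n) : ¬ (g a = g b ∧ a < b) := fun ⟨h, hab⟩ ↦ hab.ne (hg h)
  simp only [standardize_eq_iff, hties, or_false]

lemma standardize_lt_standardize_iff_of_injective {g : Fin n → α} (hg : Function.Injective g)
    {a b : Fin n} : standardize g a < standardize g b ↔ g a < g b :=
  (standardize_eq_iff_of_injective hg).1 rfl a b

lemma standardize_strictMono_comp {ψ : α → β} (hψ : StrictMono ψ) (g : Fin n → α) :
    standardize (ψ ∘ g) = standardize g := by
  simp only [standardize_eq_iff, standardize_lt_standardize_iff, Function.comp_apply,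
    hψ.lt_iff_lt, hψ.injective.eq_iff, implies_true]

lemma standardize_standardize_comp (g : Fin n → α) {φ : Fin m → Fin n} (hφ : StrictMono φ) :
    standardize (standardize g ∘ φ) = standardize (g ∘ φ) := by
  have hties (a b : Fin m) : ¬ (a = b ∧ a < b) := fun h ↦ h.2.ne h.1
  simp only [standardize_eq_iff, standardize_lt_standardize_iff, Function.comp_apply,
    hφ.lt_iff_lt, EmbeddingLike.apply_eq_iff_eq, hφ.injective.eq_iff, hties, or_false,
    implies_true]

end Standardization

section Window

variable {α : Type*} {m n : ℕ}

/-- The factor of length `m` starting at position `i` of the infinite word `s`. -/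
def window (s : ℕ → α) (m i : ℕ) : Fin m → α :=
  fun a ↦ s (i + a)

lemma window_comp_castSucc (s : ℕ → α) (m i : ℕ) :
    window s (m + 1) i ∘ Fin.castSucc = window s m i :=
  rfl

lemma window_comp_succ (s : ℕ → α) (m i : ℕ) :
    window s (m + 1) i ∘ Fin.succ = window s m (i + 1) := by
  ext a
  simp only [window, Function.comp_apply, Fin.val_succ, Nat.add_right_comm, Nat.add_assoc]

lemma window_update_of_le (s : ℕ → α) (v : α) {i j : ℕ} (h : i + m ≤ j) :
    window (Function.update s j v) m i = window s m i := by
  ext a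
  exact Function.update_of_ne (by omega) _ _

lemma window_update_succ (s : ℕ → α) (m i : ℕ) (v : α) :
    window (Function.update s (i + m) v) (m + 1) i = Fin.snoc (window s m i) v := by
  rw [← Fin.snoc_init_self (window _ (m + 1) i)]
  congr 1
  · exact window_update_of_le s v le_rfl
  · exact Function.update_self _ _ _

lemma window_eq_window_comp (s : ℕ → α) {i : ℕ} (h : i + m ≤ n) :
    window s m i = window s n 0 ∘ fun a : Fin m ↦ (a.natAdd i).castLE h := by
  ext a
  simp [window]

lemma window_papp (σ : Perm (Fin n)) {i : ℕ} (h : i + m ≤ n) :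
    window (papp σ) m i = Fin.val ∘ σ ∘ fun a : Fin m ↦ (a.natAdd i).castLE h := by
  ext a
  have ha : i + a < n := by omega
  simp only [window, papp, ha, dif_pos, Function.comp_apply]
  rfl

lemma standardize_window_papp_standardize [LinearOrder α] (s : ℕ → α) {i : ℕ} (h : i + m ≤ n) :
    standardize (window (papp (standardize (window s n 0))) m i) = standardize (window s m i) := by
  have hφ : StrictMono fun a : Fin m ↦ (a.natAdd i).castLE h :=
    (Fin.strictMono_castLE h).comp (Fin.strictMono_natAdd i)
  rw [window_papp _ h, standardize_strictMono_comp Fin.val_strictMono,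
    standardize_standardize_comp _ hφ, ← window_eq_window_comp]

lemma dsum_castAdd (p : Perm (Fin m)) (q : Perm (Fin n)) (a : Fin m) :
    dsum p q (a.castAdd n) = (p a).castAdd n := by
  simp [dsum]

lemma dsum_natAdd (p : Perm (Fin m)) (q : Perm (Fin n)) (b : Fin n) :
    dsum p q (b.natAdd m) = (q b).natAdd m := by
  simp [dsum]

lemma window_papp_dsum_left (p : Perm (Fin m)) (q : Perm (Fin n)) :
    window (papp (dsum p q)) m 0 = Fin.val ∘ p := by
  have h : 0 + m ≤ m + n := by omega
  ext a
  have ha : (a.natAdd 0).castLE h = a.castAdd n := Fin.ext (Nat.zero_add a)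
  simp only [window_papp _ h, Function.comp_apply, ha, dsum_castAdd, Fin.val_castAdd]

lemma window_papp_dsum_right (p : Perm (Fin m)) (q : Perm (Fin n)) :
    window (papp (dsum p q)) n m = Fin.val ∘ Fin.natAdd m ∘ q := by
  rw [window_papp _ le_rfl]
  exact funext fun b ↦ congrArg Fin.val (dsum_natAdd p q b)

lemma cocc_eq_card_filter_standardize_window (π : Perm (Fin m)) (σ : Perm (Fin n)) :
    cocc π σ = #{i ∈ range (n + 1 - m) | standardize (window (papp σ) m i) = π} := by
  refine congrArg card (filter_congr fun i hi ↦ ?_)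
  rw [mem_range] at hi
  have h : i + m ≤ n := by omega
  rw [standardize_eq_iff_of_injective]
  · rfl
  · rw [window_papp σ h]
    exact Fin.val_injective.comp <| σ.injective.comp <|
      (Fin.castLE_injective h).comp (Fin.natAdd_injective m i)

end Window

section Overlap

variable {α : Type*} [LinearOrder α] {k : ℕ}

/-- The pattern of the first `k` entries of a permutation of size `k + 1`: the source of `p` as an
edge of the graph of overlapping permutations, whose vertices are the permutations of size `k`. -/
def prefixPattern (p : Perm (Fin (k + 1))) : Perm (Fin k) :=
  standardize (p ∘ Fin.castSucc)

/-- The pattern of the last `k` entries of a permutation of size `k + 1`: the target of `p` as an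
edge of the graph of overlapping permutations. -/
def suffixPattern (p : Perm (Fin (k + 1))) : Perm (Fin k) :=
  standardize (p ∘ Fin.succ)

lemma prefixPattern_standardize_window (s : ℕ → α) (k i : ℕ) :
    prefixPattern (standardize (window s (k + 1) i)) = standardize (window s k i) := by
  rw [prefixPattern, standardize_standardize_comp _ Fin.strictMono_castSucc,
    window_comp_castSucc]

lemma suffixPattern_standardize_window (s : ℕ → α) (k i : ℕ) :
    suffixPattern (standardize (window s (k + 1) i)) = standardize (window s k (i + 1)) := by
  rw [suffixPattern, standardize_standardize_comp _ Fin.strictMono_succ, window_comp_succ]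

lemma isTransitionSystem_mulRight_finRotate (k : ℕ) :
    IsTransitionSystem prefixPattern suffixPattern (Equiv.mulRight (finRotate (k + 1))) := by
  intro p
  refine congrArg standardize (funext fun a ↦ ?_)
  simp

lemma reflTransGen_standardize_window (s : ℕ → α) (k i : ℕ) :
    Relation.ReflTransGen (fun p q ↦ suffixPattern p = prefixPattern q)
      (standardize (window s (k + 1) 0)) (standardize (window s (k + 1) i)) := by
  induction i with
  | zero => rfl
  | succ i ih =>
    refine ih.tail ?_
    rw [suffixPattern_standardize_window, prefixPattern_standardize_window]

lemma reflTransGen_overlap (p q : Perm (Fin (k + 1))) :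
    Relation.ReflTransGen (fun p q ↦ suffixPattern p = prefixPattern q) p q := by
  have h := reflTransGen_standardize_window (papp (dsum p q)) k (k + 1)
  rwa [window_papp_dsum_left, window_papp_dsum_right,
    standardize_strictMono_comp Fin.val_strictMono, standardize_strictMono_comp Fin.val_strictMono,
    standardize_strictMono_comp (Fin.strictMono_natAdd _), standardize_coe, standardize_coe] at h

end Overlap

section Realization

variable {α : Type*} [LinearOrder α] [DenselyOrdered α] [NoMinOrder α] [NoMaxOrder α] [Nonempty α]
  {k : ℕ}

lemma exists_between_finsets_notMem {lo hi : Finset α} (h : ∀ x ∈ lo, ∀ y ∈ hi, x < y)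
    (t : Finset α) : ∃ v ∉ t, (∀ x ∈ lo, x < v) ∧ ∀ y ∈ hi, v < y := by
  obtain ⟨c, hlc, hch⟩ := Order.exists_between_finsets lo hi h
  obtain ⟨d, hcd, hdh⟩ := Order.exists_between_finsets {c} hi (by simpa using hch)
  obtain ⟨v, ⟨hcv, hvd⟩, hvt⟩ :=
    (Set.Ioo_infinite (hcd c (mem_singleton_self c))).exists_notMem_finset t
  exact ⟨v, hvt, fun x hx ↦ (hlc x hx).trans hcv, fun y hy ↦ hvd.trans (hdh y hy)⟩

lemma exists_standardize_snoc_eq {x : Fin k → α} (hx : Function.Injective x)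
    {p : Perm (Fin (k + 1))} (hp : standardize x = prefixPattern p) (t : Finset α) :
    ∃ v ∉ t, standardize (Fin.snoc x v : Fin (k + 1) → α) = p := by
  have hlt (a b : Fin k) : p a.castSucc < p b.castSucc ↔ x a < x b := by
    rw [← standardize_lt_standardize_iff_of_injective hx, hp, prefixPattern,
      standardize_lt_standardize_iff_of_injective (p.injective.comp (Fin.castSucc_injective k))]
    rfl
  obtain ⟨v, hvt, hlo, hhi⟩ := exists_between_finsets_notMem
    (lo := image x {a | p a.castSucc < p (Fin.last k)})
    (hi := image x {a | p (Fin.last k) < p a.castSucc}) (by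
      simp only [forall_mem_image, mem_filter_univ]
      exact fun a ha b hb ↦ (hlt a b).1 (ha.trans hb)) t
  simp only [forall_mem_image, mem_filter_univ] at hlo hhi
  refine ⟨v, hvt, standardize_eq_of_forall_lt fun a b hab ↦ ?_⟩
  cases a using Fin.lastCases <;> cases b using Fin.lastCases <;>
    simp only [Fin.snoc_last, Fin.snoc_castSucc]
  case last.last => exact absurd hab (lt_irrefl _)
  case last.cast b => exact hhi hab
  case cast.last a => exact hlo hab
  case cast.cast a b => exact (hlt a b).1 hab

variable (α) in
lemma exists_forall_standardize_window_eq {e : ℕ → Perm (Fin (k + 1))}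
    (he : ∀ i, suffixPattern (e i) = prefixPattern (e (i + 1))) (n : ℕ) :
    ∃ s : ℕ → α, Function.Injective (window s (n + k) 0) ∧
      standardize (window s k n) = prefixPattern (e n) ∧
      ∀ i < n, standardize (window s (k + 1) i) = e i := by
  induction n with
  | zero =>
    obtain ⟨ι⟩ := Order.embedding_from_countable_to_dense (Fin k) α
    obtain ⟨s, hs⟩ : ∃ s : ℕ → α, window s k 0 = ι ∘ prefixPattern (e 0) :=
      ⟨Function.extend Fin.val (ι ∘ prefixPattern (e 0)) (fun _ ↦ Classical.arbitrary α),
        funext fun a ↦ by rw [window, Nat.zero_add, Fin.val_injective.extend_apply]⟩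
    refine ⟨s, ?_, ?_, by simp⟩
    · rw [Nat.zero_add, hs]
      exact ι.injective.comp (Equiv.injective _)
    · rw [hs, standardize_strictMono_comp ι.strictMono, standardize_coe]
  | succ n ih =>
    obtain ⟨s, hinj, hn, hlt⟩ := ih
    have hinj_n : Function.Injective (window s k n) := by
      rw [window_eq_window_comp s le_rfl]
      exact hinj.comp ((Fin.castLE_injective _).comp (Fin.natAdd_injective k n))
    obtain ⟨v, hv, hsnoc⟩ := exists_standardize_snoc_eq hinj_n hn (univ.image (window s (n + k) 0))
    have hnew : standardize (window (Function.update s (n + k) v) (k + 1) n) = e n := by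
      rw [window_update_succ, hsnoc]
    refine ⟨Function.update s (n + k) v, ?_, ?_, fun i hi ↦ ?_⟩
    · have hupd := window_update_succ s (n + k) 0 v
      rw [Nat.zero_add] at hupd
      rw [Nat.add_right_comm, hupd]
      exact Fin.snoc_injective_of_injective hinj (by simpa using hv)
    · rw [← suffixPattern_standardize_window, hnew, he]
    · obtain hi | rfl := Nat.lt_succ_iff_lt_or_eq.1 hi
      · rw [window_update_of_le s v (by omega), hlt i hi]
      · exact hnew

end Realization

theorem exists_perm_forall_standardize_window_eq {k : ℕ} {e : ℕ → Perm (Fin (k + 1))}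
    (he : ∀ i, suffixPattern (e i) = prefixPattern (e (i + 1))) (n : ℕ) :
    ∃ σ : Perm (Fin (n + k)), ∀ i < n, standardize (window (papp σ) (k + 1) i) = e i := by
  obtain ⟨s, -, -, hs⟩ := exists_forall_standardize_window_eq ℚ he n
  exact ⟨standardize (window s (n + k) 0), fun i hi ↦
    (standardize_window_papp_standardize s (by omega)).trans (hs i hi)⟩

end Superpermutation

open Superpermutation

/-- There is a "superpermutation" of minimal size for consecutive patterns: a permutation of
size `(k+1)! + (k+1) − 1` containing every pattern of size `k+1` exactly once as a
consecutive pattern. -/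
theorem exists_superpermutation (k : ℕ) :
    ∃ σ : Equiv.Perm (Fin (Nat.factorial (k + 1) + k)),
      ∀ π : Equiv.Perm (Fin (k + 1)), cocc π σ = 1 := by
  obtain ⟨f, hf, hcycle⟩ := exists_isTransitionSystem_isCycleOn_univ
    ⟨_, isTransitionSystem_mulRight_finRotate k⟩ 1 (reflTransGen_overlap 1)
  obtain ⟨σ, hσ⟩ := exists_perm_forall_standardize_window_eq (e := fun i ↦ (f ^ i) 1)
    (fun i ↦ by rw [pow_succ', Equiv.Perm.mul_apply, hf]) (k + 1).factorial
  have hcard : Fintype.card (Equiv.Perm (Fin (k + 1))) = (k + 1).factorial := by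
    rw [Fintype.card_perm, Fintype.card_fin]
  have hsize : (k + 1).factorial + k + 1 - (k + 1) = (k + 1).factorial := by omega
  refine ⟨σ, fun π ↦ ?_⟩
  calc
    cocc π σ = #{i ∈ range (k + 1).factorial | standardize (window (papp σ) (k + 1) i) = π} := by
      rw [cocc_eq_card_filter_standardize_window, hsize]
    _ = #{i ∈ range (k + 1).factorial | (f ^ i) 1 = π} :=
      congrArg card (filter_congr fun i hi ↦ by rw [hσ i (mem_range.1 hi)])
    _ = 1 := by rw [← hcard, card_filter_range_pow_apply_eq hcycle]
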